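/- Let H be a MAX-PROD-CSP instance over a finite set V of Boolean variables all of whose constraints belong to ED or are unary. Then there exist a family of unary functions u_v : {0,1} → ℝ_{≥0} (v ∈ V) and a finite set T of triples (p,q,c) ∈ V × V × GF(2) such that for every assignment σ : V → {0,1}: m(σ) = ∏_{v∈V} u_v(σ(v)) if σ(p) ⊕ σ(q) = c holds for every (p,q,c) ∈ T, and m(σ) = 0 otherwise. -/

import Mathlib

open scoped NNReal

/-- The canonical embedding of Booleans into GF(2). -/
def boolZ : Bool → ZMod 2 := fun b => if b then 1 else 0

/-- The class ED: products of unary constraints and of binary equality (`c = false`) and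
disequality (`c = true`) constraints, each factor applied to some of the variables. -/
def InED {k : ℕ} (f : (Fin k → Bool) → ℝ≥0) : Prop :=
  ∃ (U : List (Fin k × (Bool → ℝ≥0))) (B : List (Fin k × Fin k × Bool)),
    ∀ x : Fin k → Bool,
      f x = (U.map fun t => t.2 (x t.1)).prod *
        (B.map fun t => if xor (x t.1) (x t.2.1) = t.2.2 then (1 : ℝ≥0) else 0).prod

/-- A MAX-PROD-CSP instance over Boolean variables indexed by `Fin n`. -/
abbrev CSPInstance (n : ℕ) : Type :=
  List (Σ k : ℕ, ((Fin k → Bool) → ℝ≥0) × (Fin k → Fin n))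

/-- The multiplicative measure of an assignment `σ` for an instance `H`. -/
def cspMeasure {n : ℕ} (H : CSPInstance n) (σ : Fin n → Bool) : ℝ≥0 :=
  (H.map fun c => c.2.1 fun j => σ (c.2.2 j)).prod

/-! ED is closed under products and under substitution of variables, and it contains the unary
constraints, so the measure of the instance is itself an ED function of the assignment. In any ED
function, multiply together the unary factors attached to each variable and impose all the parity
conditions simultaneously. -/

section NormalForm

variable {ι α M : Type*}

theorem prod_map_ite_one_zero [MonoidWithZero M] (L : List α) (P : α → Prop)
    [DecidablePred P] [Decidable (∀ a ∈ L, P a)] :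
    (L.map fun a => if P a then (1 : M) else 0).prod = if ∀ a ∈ L, P a then 1 else 0 := by
  split_ifs with hP
  · exact List.prod_eq_one (List.forall_mem_map.2 fun a ha => if_pos (hP a ha))
  · push Not at hP
    obtain ⟨a, ha, haP⟩ := hP
    exact List.prod_eq_zero (List.mem_map.2 ⟨a, ha, if_neg haP⟩)

theorem prod_map_apply_eq_prod_univ [Fintype ι] [DecidableEq ι] [CommMonoid M]
    (U : List (ι × (α → M))) (σ : ι → α) :
    (U.map fun t => t.2 (σ t.1)).prod =
      ∏ i, (U.map fun t => (Pi.mulSingle t.1 t.2 : ι → α → M)).prod i (σ i) := by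
  induction U with
  | nil => simp
  | cons t U ih =>
    have prod_mulSingle : ∏ i, (Pi.mulSingle t.1 t.2 : ι → α → M) i (σ i) = t.2 (σ t.1) := by
      rw [Fintype.prod_eq_single t.1 fun i hi => by simp [hi], Pi.mulSingle_eq_same]
    simp only [List.map_cons, List.prod_cons, Pi.mul_apply, Finset.prod_mul_distrib,
      prod_mulSingle, ih]

theorem boolZ_add_eq_boolZ_iff (a b c : Bool) : boolZ a + boolZ b = boolZ c ↔ xor a b = c := by
  decide +revert

theorem exists_prod_mul_prod_eq_ite_parity [Fintype ι] [DecidableEq ι] [CommMonoidWithZero M]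
    (U : List (ι × (Bool → M))) (B : List (ι × ι × Bool)) :
    ∃ (u : ι → Bool → M) (T : Finset (ι × ι × ZMod 2)), ∀ σ : ι → Bool,
      (U.map fun t => t.2 (σ t.1)).prod *
          (B.map fun t => if xor (σ t.1) (σ t.2.1) = t.2.2 then (1 : M) else 0).prod =
        if ∀ t ∈ T, boolZ (σ t.1) + boolZ (σ t.2.1) = t.2.2 then ∏ i, u i (σ i) else 0 := by
  refine ⟨(U.map fun t => Pi.mulSingle t.1 t.2).prod,
    (B.map fun t => (t.1, t.2.1, boolZ t.2.2)).toFinset, fun σ => ?_⟩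
  rw [prod_map_apply_eq_prod_univ, prod_map_ite_one_zero, mul_ite, mul_one, mul_zero]
  simp only [List.mem_toFinset, List.forall_mem_map, boolZ_add_eq_boolZ_iff]

end NormalForm

namespace InED

variable {k n : ℕ}

theorem one : InED (1 : (Fin k → Bool) → ℝ≥0) :=
  ⟨[], [], fun _ => by simp⟩

theorem mul {f g : (Fin k → Bool) → ℝ≥0} (hf : InED f) (hg : InED g) : InED (f * g) := by
  obtain ⟨U, B, hf⟩ := hf
  obtain ⟨U', B', hg⟩ := hg
  refine ⟨U ++ U', B ++ B', fun x => ?_⟩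
  simp only [Pi.mul_apply, hf, hg, List.map_append, List.prod_append]
  exact mul_mul_mul_comm _ _ _ _

theorem list_prod {L : List ((Fin k → Bool) → ℝ≥0)} (hL : ∀ f ∈ L, InED f) : InED L.prod := by
  induction L with
  | nil => exact one
  | cons f L ih =>
    rw [List.forall_mem_cons] at hL
    rw [List.prod_cons]
    exact hL.1.mul (ih hL.2)

theorem comp_vars {f : (Fin k → Bool) → ℝ≥0} (hf : InED f) (x : Fin k → Fin n) :
    InED fun σ : Fin n → Bool => f fun j => σ (x j) := by
  obtain ⟨U, B, hf⟩ := hf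
  refine ⟨U.map fun t => (x t.1, t.2), B.map fun t => (x t.1, x t.2.1, t.2.2), fun σ => ?_⟩
  simp only [hf, List.map_map, Function.comp_def]

theorem of_arity_eq_one (hk : k = 1) (f : (Fin k → Bool) → ℝ≥0) : InED f := by
  subst hk
  refine ⟨[(0, fun b => f fun _ => b)], [], fun x => ?_⟩
  have x_eq_const : x = fun _ => x 0 := funext fun j => congrArg x (Subsingleton.elim j 0)
  simp [← x_eq_const]

end InED

theorem inED_cspMeasure {n : ℕ} {H : CSPInstance n} (hH : ∀ c ∈ H, InED c.2.1) :
    InED (cspMeasure H) := by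
  have measure_eq_prod : cspMeasure H =
      (H.map fun c σ => c.2.1 fun j => σ (c.2.2 j)).prod := by
    funext σ
    simp only [cspMeasure, Pi.list_prod_apply, List.map_map, Function.comp_def]
  rw [measure_eq_prod]
  exact InED.list_prod (List.forall_mem_map.2 fun c hc => (hH c hc).comp_vars c.2.2)

/-- If every constraint of a MAX-PROD-CSP instance belongs to ED or is
unary, then there are unary functions `u_v` and a finite set `T` of parity constraints
`(p,q,c) ∈ V × V × GF(2)` such that the measure of `σ` equals `∏_v u_v(σ v)` when
`σ p ⊕ σ q = c` for every `(p,q,c) ∈ T`, and `0` otherwise. -/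
theorem stmt10 {n : ℕ} (H : CSPInstance n)
    (hH : ∀ c ∈ H, InED c.2.1 ∨ c.1 = 1) :
    ∃ (u : Fin n → Bool → ℝ≥0) (T : Finset (Fin n × Fin n × ZMod 2)),
      ∀ σ : Fin n → Bool,
        cspMeasure H σ
          = if ∀ t ∈ T, boolZ (σ t.1) + boolZ (σ t.2.1) = t.2.2
            then ∏ v, u v (σ v) else 0 := by
  have measure_mem : InED (cspMeasure H) :=
    inED_cspMeasure fun c hc => (hH c hc).elim id fun hk => .of_arity_eq_one hk c.2.1
  obtain ⟨U, B, measure_eq⟩ := measure_mem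
  obtain ⟨u, T, normal_form⟩ := exists_prod_mul_prod_eq_ite_parity U B
  exact ⟨u, T, fun σ => (measure_eq σ).trans (normal_form σ)⟩
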